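/- (Theorem 2: differentially private pixelization) Let M = G_R·b, N = G_C·b, m ≥ 1, ε > 0, and set σ = 255·m/(b²·ε). For an image I : Fin M × Fin N → ℝ with values in [0,255], let μ(I) ∈ (Fin G_R × Fin G_C) → ℝ be its vector of grid means, let λ_σ be the product over all grid indices of the Laplace measure with scale σ, and let μ_I be the pushforward of λ_σ under η ↦ μ(I) + η. Then for any two images I₁, I₂ with values in [0,255] differing at at most m positions and for every measurable set S ⊆ ((Fin G_R × Fin G_C) → ℝ), μ_{I₁}(S) ≤ exp(ε) · μ_{I₂}(S); i.e., the mechanism that adds independent Laplace(255·m/(b²·ε)) noise to every grid mean satisfies ε-differential privacy with respect to the m-neighboring relation on images. -/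

import Mathlib

/-!
The grids are pairwise disjoint, so the vectors of grid means of two `m`-neighboring images are at
`ℓ¹`-distance at most `255·m/b² = ε·σ`. Moving the centre of a Laplace density by `d` changes it
pointwise by a factor of at most `exp (d / σ)`, and such factors multiply over independent
coordinates, so moving the centre of the product measure by `ε·σ` in `ℓ¹` costs at most `exp ε`.
-/

open MeasureTheory

/-- The Laplace measure with scale `σ` on `ℝ`. -/
noncomputable def laplaceMeasure (σ : ℝ) : Measure ℝ :=
  volume.withDensity (fun t => ENNReal.ofReal ((1 / (2 * σ)) * Real.exp (-|t| / σ)))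

/-- The `b×b` grid with index `(r,c)`. -/
def grid (G_R G_C b : ℕ) (rc : Fin G_R × Fin G_C) :
    Finset (Fin (G_R * b) × Fin (G_C * b)) :=
  Finset.univ.filter (fun p =>
    rc.1.val * b ≤ p.1.val ∧ p.1.val < (rc.1.val + 1) * b ∧
    rc.2.val * b ≤ p.2.val ∧ p.2.val < (rc.2.val + 1) * b)

/-- The grid mean `μ_{r,c}(I) = (1/b²) · ∑_{(i,j) ∈ G_{r,c}} I(i,j)`. -/
noncomputable def gridMean (G_R G_C b : ℕ) (I : Fin (G_R * b) × Fin (G_C * b) → ℝ)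
    (rc : Fin G_R × Fin G_C) : ℝ :=
  (1 / (b : ℝ) ^ 2) * ∑ p ∈ grid G_R G_C b rc, I p

open scoped ENNReal NNReal

instance sigmaFinite_map_add_left {G : Type*} [AddGroup G] [MeasurableSpace G] [MeasurableAdd G]
    (μ : Measure G) [SigmaFinite μ] (a : G) : SigmaFinite (μ.map (a + ·)) :=
  (MeasurableEquiv.addLeft a).sigmaFinite_map

section ProductMeasures

variable {ι : Type*} [Fintype ι] {α : ι → Type*} [∀ i, MeasurableSpace (α i)]

lemma measurePi_mono {μ ν : ∀ i, Measure (α i)} [∀ i, SigmaFinite (μ i)] (h : ∀ i, μ i ≤ ν i) :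
    Measure.pi μ ≤ Measure.pi ν := by
  -- `OuterMeasure.pi` is the largest outer measure bounded by the product on boxes.
  have hboxes : (Measure.pi μ).toOuterMeasure ≤ OuterMeasure.pi fun i => (ν i).toOuterMeasure := by
    refine OuterMeasure.le_pi.2 fun s _ => ?_
    simp only [Measure.coe_toOuterMeasure, Measure.pi_pi]
    exact Finset.prod_le_prod' fun i _ => h i (s i)
  rw [Measure.pi_def ν]
  exact Measure.le_iff.2 fun s _ => (hboxes s).trans (le_toMeasure_apply _ _ _)

lemma measurePi_smul (c : ι → ℝ≥0) (μ : ∀ i, Measure (α i)) [∀ i, SigmaFinite (μ i)] :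
    Measure.pi (fun i => c i • μ i) = (∏ i, c i) • Measure.pi μ := by
  refine Measure.pi_eq fun s _ => ?_
  simp only [Measure.smul_apply, Measure.pi_pi, ENNReal.smul_def, smul_eq_mul,
    Finset.prod_mul_distrib, ENNReal.ofNNReal_finsetProd]

lemma measurePi_map_add_left [∀ i, AddGroup (α i)] [∀ i, MeasurableAdd (α i)]
    (μ : ∀ i, Measure (α i)) [∀ i, SigmaFinite (μ i)] (a : ∀ i, α i) :
    (Measure.pi μ).map (a + ·) = Measure.pi fun i => (μ i).map (a i + ·) :=
  Measure.pi_map_pi (f := fun i => (a i + ·)) fun i => (measurable_const_add (a i)).aemeasurable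

end ProductMeasures

lemma withDensity_map_equiv {α β : Type*} [MeasurableSpace α] [MeasurableSpace β]
    (μ : Measure α) (f : α → ℝ≥0∞) (e : α ≃ᵐ β) :
    (μ.withDensity f).map e = (μ.map e).withDensity (f ∘ e.symm) := by
  ext s hs
  rw [e.map_apply, withDensity_apply _ (e.measurable hs), withDensity_apply _ hs, e.restrict_map,
    lintegral_map_equiv]
  simp only [Function.comp_apply, e.symm_apply_apply]

lemma withDensity_map_add_left {G : Type*} [AddGroup G] [MeasurableSpace G] [MeasurableAdd G]
    (μ : Measure G) [μ.IsAddLeftInvariant] (f : G → ℝ≥0∞) (a : G) :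
    (μ.withDensity f).map (a + ·) = μ.withDensity fun x => f (-a + x) := by
  have h := withDensity_map_equiv μ f (MeasurableEquiv.addLeft a)
  rwa [MeasurableEquiv.coe_addLeft, map_add_left_eq_self μ] at h

instance (σ : ℝ) : SigmaFinite (laplaceMeasure σ) :=
  SigmaFinite.withDensity_ofReal _

lemma laplaceMeasure_map_add_left (σ a : ℝ) :
    (laplaceMeasure σ).map (a + ·) =
      volume.withDensity fun t => ENNReal.ofReal (1 / (2 * σ) * Real.exp (-|t - a| / σ)) := by
  simp only [laplaceMeasure, withDensity_map_add_left, neg_add_eq_sub]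

lemma exp_neg_abs_sub_div_le {σ : ℝ} (hσ : 0 < σ) (a₁ a₂ t : ℝ) :
    Real.exp (-|t - a₁| / σ) ≤ Real.exp (|a₁ - a₂| / σ) * Real.exp (-|t - a₂| / σ) := by
  have htri : |t - a₂| ≤ |t - a₁| + |a₁ - a₂| := abs_sub_le t a₁ a₂
  rw [← Real.exp_add, ← add_div]
  gcongr
  linarith

lemma laplaceMeasure_map_add_left_le {σ : ℝ} (hσ : 0 < σ) (a₁ a₂ : ℝ) :
    (laplaceMeasure σ).map (a₁ + ·) ≤
      ENNReal.ofReal (Real.exp (|a₁ - a₂| / σ)) • (laplaceMeasure σ).map (a₂ + ·) := by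
  rw [laplaceMeasure_map_add_left, laplaceMeasure_map_add_left,
    ← withDensity_smul' _ _ ENNReal.ofReal_ne_top]
  refine withDensity_mono (ae_of_all _ fun t => ?_)
  simp only [Pi.smul_apply, smul_eq_mul]
  rw [← ENNReal.ofReal_mul (Real.exp_pos _).le, mul_left_comm]
  gcongr
  exact exp_neg_abs_sub_div_le hσ a₁ a₂ t

lemma pi_laplaceMeasure_map_add_left_le {ι : Type*} [Fintype ι] {σ : ℝ} (hσ : 0 < σ)
    (a₁ a₂ : ι → ℝ) :
    (Measure.pi fun _ => laplaceMeasure σ).map (a₁ + ·) ≤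
      ENNReal.ofReal (Real.exp ((∑ i, |a₁ i - a₂ i|) / σ)) •
        (Measure.pi fun _ => laplaceMeasure σ).map (a₂ + ·) := by
  rw [Finset.sum_div, Real.exp_sum, measurePi_map_add_left, measurePi_map_add_left]
  -- Factors in `ℝ≥0` keep the scaled measures σ-finite; they unfold to `ENNReal.ofReal`.
  calc Measure.pi (fun i => (laplaceMeasure σ).map (a₁ i + ·))
      ≤ Measure.pi fun i =>
          (Real.exp (|a₁ i - a₂ i| / σ)).toNNReal • (laplaceMeasure σ).map (a₂ i + ·) :=
        measurePi_mono fun i => laplaceMeasure_map_add_left_le hσ (a₁ i) (a₂ i)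
    _ = (∏ i, Real.exp (|a₁ i - a₂ i| / σ)).toNNReal •
          Measure.pi fun i => (laplaceMeasure σ).map (a₂ i + ·) := by
        rw [measurePi_smul, Real.toNNReal_prod_of_nonneg fun i _ => (Real.exp_pos _).le]

lemma sum_abs_sub_le_ncard_nsmul {α R : Type*} [Fintype α] [AddCommGroup R] [LinearOrder R]
    [IsOrderedAddMonoid R] {f g : α → R} {D : R} (h : ∀ x, |f x - g x| ≤ D) :
    ∑ x, |f x - g x| ≤ {x | f x ≠ g x}.ncard • D := by
  classical
  calc ∑ x, |f x - g x| = ∑ x with f x ≠ g x, |f x - g x| :=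
        (Finset.sum_filter_of_ne fun x _ hx => by simpa [sub_eq_zero] using hx).symm
    _ ≤ (Finset.univ.filter fun x => f x ≠ g x).card • D :=
        Finset.sum_le_card_nsmul _ _ _ fun x _ => h x
    _ = {x | f x ≠ g x}.ncard • D := by
        rw [← Set.ncard_coe_finset, Finset.coe_filter_univ]

lemma grid_pairwise_disjoint (G_R G_C b : ℕ) :
    Pairwise (Function.onFun Disjoint (grid G_R G_C b)) := by
  -- A pixel `p` of the grid `(r, c)` determines `r = p.1 / b` and `c = p.2 / b`.
  refine fun x y hxy => Finset.disjoint_left.2 fun p hx hy => hxy ?_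
  simp only [grid, Finset.mem_filter, Finset.mem_univ, true_and] at hx hy
  obtain ⟨hx_row, hx_row', hx_col, hx_col'⟩ := hx
  obtain ⟨hy_row, hy_row', hy_col, hy_col'⟩ := hy
  refine Prod.ext (Fin.ext ?_) (Fin.ext ?_)
  · rw [← Nat.div_eq_of_lt_le hx_row hx_row', ← Nat.div_eq_of_lt_le hy_row hy_row']
  · rw [← Nat.div_eq_of_lt_le hx_col hx_col', ← Nat.div_eq_of_lt_le hy_col hy_col']

section GridMean

variable {G_R G_C b : ℕ} (I₁ I₂ : Fin (G_R * b) × Fin (G_C * b) → ℝ)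

lemma abs_gridMean_sub_le (rc : Fin G_R × Fin G_C) :
    |gridMean G_R G_C b I₁ rc - gridMean G_R G_C b I₂ rc| ≤
      1 / (b : ℝ) ^ 2 * ∑ p ∈ grid G_R G_C b rc, |I₁ p - I₂ p| := by
  rw [gridMean, gridMean, ← mul_sub, ← Finset.sum_sub_distrib, abs_mul,
    abs_of_nonneg (show (0 : ℝ) ≤ 1 / (b : ℝ) ^ 2 by positivity)]
  gcongr
  exact Finset.abs_sum_le_sum_abs _ _

lemma sum_abs_gridMean_sub_le :
    ∑ rc, |gridMean G_R G_C b I₁ rc - gridMean G_R G_C b I₂ rc| ≤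
      1 / (b : ℝ) ^ 2 * ∑ p, |I₁ p - I₂ p| := by
  calc ∑ rc, |gridMean G_R G_C b I₁ rc - gridMean G_R G_C b I₂ rc|
      ≤ ∑ rc, 1 / (b : ℝ) ^ 2 * ∑ p ∈ grid G_R G_C b rc, |I₁ p - I₂ p| :=
        Finset.sum_le_sum fun rc _ => abs_gridMean_sub_le I₁ I₂ rc
    _ = 1 / (b : ℝ) ^ 2 * ∑ p ∈ Finset.univ.biUnion (grid G_R G_C b), |I₁ p - I₂ p| := by
        rw [Finset.sum_biUnion ((grid_pairwise_disjoint G_R G_C b).set_pairwise _), Finset.mul_sum]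
    _ ≤ 1 / (b : ℝ) ^ 2 * ∑ p, |I₁ p - I₂ p| := by
        gcongr
        exact Finset.subset_univ _

end GridMean

theorem stmt_11_general {G_R G_C b m : ℕ} (hb : 0 < b) (hm : 1 ≤ m) {ε D σ : ℝ} (hε : 0 < ε)
    (hD : 0 < D) (hσ : D * m / ((b : ℝ) ^ 2 * ε) ≤ σ)
    {I₁ I₂ : Fin (G_R * b) × Fin (G_C * b) → ℝ} (hI : ∀ q, |I₁ q - I₂ q| ≤ D)
    (hdiff : {q | I₁ q ≠ I₂ q}.ncard ≤ m) :
    (Measure.pi fun _ => laplaceMeasure σ).map (gridMean G_R G_C b I₁ + ·) ≤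
      ENNReal.ofReal (Real.exp ε) •
        (Measure.pi fun _ => laplaceMeasure σ).map (gridMean G_R G_C b I₂ + ·) := by
  have hσ_pos : 0 < σ := lt_of_lt_of_le (by positivity) hσ
  have hpixels : ∑ q, |I₁ q - I₂ q| ≤ m * D := by
    rw [← nsmul_eq_mul]
    exact (sum_abs_sub_le_ncard_nsmul hI).trans (nsmul_le_nsmul_left hD.le hdiff)
  have hsens : ∑ rc, |gridMean G_R G_C b I₁ rc - gridMean G_R G_C b I₂ rc| ≤ ε * σ :=
    calc ∑ rc, |gridMean G_R G_C b I₁ rc - gridMean G_R G_C b I₂ rc|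
        ≤ 1 / (b : ℝ) ^ 2 * (m * D) := (sum_abs_gridMean_sub_le I₁ I₂).trans (by gcongr)
      _ = ε * (D * m / ((b : ℝ) ^ 2 * ε)) := by field_simp
      _ ≤ ε * σ := by gcongr
  refine (pi_laplaceMeasure_map_add_left_le hσ_pos _ (gridMean G_R G_C b I₂)).trans ?_
  gcongr
  exact (div_le_iff₀ hσ_pos).2 hsens

/-- Differentially private pixelization: with `σ = 255·m/(b²·ε)`, adding
independent Laplace(σ) noise to every grid mean satisfies `ε`-differential privacy
with respect to the `m`-neighboring relation on images with values in `[0,255]`. -/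
theorem stmt_11 (G_R G_C b m : ℕ) (hb : 0 < b) (hm : 1 ≤ m) (ε : ℝ) (hε : 0 < ε)
    (σ : ℝ) (hσ : σ = 255 * m / ((b : ℝ) ^ 2 * ε))
    (I₁ I₂ : Fin (G_R * b) × Fin (G_C * b) → ℝ)
    (hI₁ : ∀ q, I₁ q ∈ Set.Icc (0 : ℝ) 255) (hI₂ : ∀ q, I₂ q ∈ Set.Icc (0 : ℝ) 255)
    (hdiff : {q | I₁ q ≠ I₂ q}.ncard ≤ m)
    (S : Set ((Fin G_R × Fin G_C) → ℝ)) (hS : MeasurableSet S) :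
    (Measure.pi fun _ : Fin G_R × Fin G_C => laplaceMeasure σ).map
        (fun η => (fun rc => gridMean G_R G_C b I₁ rc) + η) S ≤
      ENNReal.ofReal (Real.exp ε) *
        (Measure.pi fun _ : Fin G_R × Fin G_C => laplaceMeasure σ).map
          (fun η => (fun rc => gridMean G_R G_C b I₂ rc) + η) S :=
  stmt_11_general hb hm hε (by norm_num) hσ.ge
    (fun q => abs_sub_le_of_nonneg_of_le (hI₁ q).1 (hI₁ q).2 (hI₂ q).1 (hI₂ q).2) hdiff S
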